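/- arXiv:2107.02999 — 4 statements merged into one kernel-verified Lean document; each statement's English description precedes it below -/
import Mathlib

section
/- Let 0 ≤ q < 1 and let Ω ∈ U_q(s_p, M_p) be a p×p matrix with inverse Σ = Ω^{-1}. Let Σ̂ ∈ ℝ^{p×p} be a symmetric matrix and let λ ≥ 0 satisfy λ ≥ 3‖Ω‖_{L1}‖Σ̂ − Σ‖_∞ and ‖Ω‖_{L1}^{−q} λ^{1−q} s_p ≤ 1/2. Fix i ∈ {1,…,p} and set β* = Ω e_i (the i-th column of Ω, where e_i is the i-th standard basis vector). Then every global minimizer β̂ over ℝ^p of the function β ↦ (1/2)βᵀΣ̂β − e_iᵀβ + λ|β|_1 satisfies |β̂ − β*|_1 ≤ 16 ‖Ω‖_{L1}^{1−q} s_p λ^{1−q}. -/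
open Matrix
open scoped BigOperators

/-- The ℓ1 norm of a vector in ℝ^p. -/
noncomputable def vecL1 {p : ℕ} (a : Fin p → ℝ) : ℝ := ∑ i, |a i|

/-- The entrywise supremum norm of a p×p matrix. -/
noncomputable def matLinf {p : ℕ} (A : Matrix (Fin p) (Fin p) ℝ) : ℝ := ⨆ i, ⨆ j, |A i j|

/-- The maximum absolute column-sum norm of a p×p matrix. -/
noncomputable def matL1 {p : ℕ} (A : Matrix (Fin p) (Fin p) ℝ) : ℝ := ⨆ j, ∑ i, |A i j|

/-- The SCIO objective function β ↦ (1/2)βᵀ Σ̂ β − eᵀβ + λ|β|₁. -/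
noncomputable def scioObj {p : ℕ} (S : Matrix (Fin p) (Fin p) ℝ) (e : Fin p → ℝ)
    (lam : ℝ) (β : Fin p → ℝ) : ℝ :=
  (1 / 2) * (β ⬝ᵥ S.mulVec β) - e ⬝ᵥ β + lam * vecL1 β

lemma abs_apply_le_matLinf {p : ℕ} (A : Matrix (Fin p) (Fin p) ℝ) (i j : Fin p) :
    |A i j| ≤ matLinf A :=
  (le_ciSup (f := fun j => |A i j|) (Set.finite_range _).bddAbove j).trans
    (le_ciSup (f := fun i => ⨆ j, |A i j|) (Set.finite_range _).bddAbove i)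

lemma sum_abs_col_le_matL1 {p : ℕ} (A : Matrix (Fin p) (Fin p) ℝ) (j : Fin p) :
    ∑ i, |A i j| ≤ matL1 A :=
  le_ciSup (f := fun j => ∑ i, |A i j|) (Set.finite_range _).bddAbove j

lemma vecL1_nonneg {p : ℕ} (a : Fin p → ℝ) : 0 ≤ vecL1 a :=
  Finset.sum_nonneg fun _ _ => abs_nonneg _

lemma vecL1_add_le {p : ℕ} (a b : Fin p → ℝ) : vecL1 (a + b) ≤ vecL1 a + vecL1 b := by
  unfold vecL1
  rw [← Finset.sum_add_distrib]
  exact Finset.sum_le_sum fun _ _ => abs_add_le _ _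

lemma vecL1_smul {p : ℕ} (c : ℝ) (a : Fin p → ℝ) : vecL1 (c • a) = |c| * vecL1 a := by
  simp [vecL1, abs_mul, Finset.mul_sum]

lemma abs_dotProduct_le_mul_vecL1 {p : ℕ} {a b : Fin p → ℝ} {c : ℝ} (h : ∀ j, |a j| ≤ c) :
    |a ⬝ᵥ b| ≤ c * vecL1 b := by
  unfold vecL1 dotProduct
  rw [Finset.mul_sum]
  refine (Finset.abs_sum_le_sum_abs _ _).trans (Finset.sum_le_sum fun j _ => ?_)
  rw [abs_mul]
  exact mul_le_mul_of_nonneg_right (h j) (abs_nonneg _)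

/-- Second-order expansion of the objective along a line. -/
lemma scioObj_add_smul {p : ℕ} {S : Matrix (Fin p) (Fin p) ℝ} (hS : S.IsSymm) (e : Fin p → ℝ)
    (lam : ℝ) (β d : Fin p → ℝ) (r : ℝ) :
    scioObj S e lam (β + r • d) = scioObj S e lam β + r * ((S *ᵥ β - e) ⬝ᵥ d)
      + r ^ 2 / 2 * (d ⬝ᵥ S *ᵥ d) + lam * (vecL1 (β + r • d) - vecL1 β) := by
  have hsymm : β ⬝ᵥ S *ᵥ d = d ⬝ᵥ S *ᵥ β := by
    rw [dotProduct_mulVec, dotProduct_comm, ← mulVec_transpose, hS.eq]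
  unfold scioObj
  simp only [mulVec_add, mulVec_smul, dotProduct_add, add_dotProduct, dotProduct_smul,
    smul_dotProduct, sub_dotProduct, smul_eq_mul, hsymm, dotProduct_comm (S *ᵥ β) d]
  ring

lemma nonneg_of_forall_add_mul_nonneg {a b : ℝ} (h : ∀ ε : ℝ, 0 < ε → ε ≤ 1 → 0 ≤ a + ε * b) :
    0 ≤ a := by
  by_contra! ha
  have hb : 0 < |b| + 1 := by positivity
  have hε : 0 < min 1 (-a / (2 * (|b| + 1))) :=
    lt_min one_pos (div_pos (by linarith) (by linarith))
  have h1 := h _ hε (min_le_left _ _)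
  have h2 : min 1 (-a / (2 * (|b| + 1))) * (2 * (|b| + 1)) ≤ -a := by
    rw [← le_div_iff₀ (by linarith)]
    exact min_le_right _ _
  nlinarith [le_abs_self b]

lemma nonneg_of_forall_pos_add_mul_nonneg {a b : ℝ} (h : ∀ r : ℝ, 0 < r → 0 ≤ a + r * b) :
    0 ≤ b := by
  refine nonneg_of_forall_add_mul_nonneg (b := a) fun ε hε _ => ?_
  have h1 := mul_nonneg hε.le (h ε⁻¹ (inv_pos.mpr hε))
  have h2 : ε * (a + ε⁻¹ * b) = b + ε * a := by
    field_simp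
    ring
  linarith

section Minimizer

variable {p : ℕ} {S : Matrix (Fin p) (Fin p) ℝ} {e βhat : Fin p → ℝ} {lam : ℝ}

/-- First-order optimality of a minimizer, as a variational inequality. -/
lemma scioObj_variational_ineq (hS : S.IsSymm) (hlam : 0 ≤ lam)
    (hmin : ∀ β, scioObj S e lam βhat ≤ scioObj S e lam β) (d : Fin p → ℝ) :
    0 ≤ (S *ᵥ βhat - e) ⬝ᵥ d + lam * (vecL1 (βhat + d) - vecL1 βhat) := by
  refine nonneg_of_forall_add_mul_nonneg (b := (d ⬝ᵥ S *ᵥ d) / 2) fun ε hε hε1 => ?_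
  have h1 := hmin (βhat + ε • d)
  rw [scioObj_add_smul hS] at h1
  have h2 : vecL1 (βhat + ε • d) ≤ (1 - ε) * vecL1 βhat + ε * vecL1 (βhat + d) := by
    have h := vecL1_add_le ((1 - ε) • βhat) (ε • (βhat + d))
    rw [vecL1_smul, vecL1_smul, abs_of_nonneg (sub_nonneg.mpr hε1), abs_of_pos hε] at h
    convert h using 2
    module
  have h3 := mul_le_mul_of_nonneg_left h2 hlam
  refine nonneg_of_mul_nonneg_right (a := ε) ?_ hε
  nlinarith

lemma abs_gradient_le_of_minimizer (hS : S.IsSymm) (hlam : 0 ≤ lam)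
    (hmin : ∀ β, scioObj S e lam βhat ≤ scioObj S e lam β) (j : Fin p) :
    |(S *ᵥ βhat - e) j| ≤ lam := by
  have key : ∀ c : ℝ, |c| = 1 → 0 ≤ (S *ᵥ βhat - e) j * c + lam := by
    intro c hc
    have h1 := scioObj_variational_ineq hS hlam hmin (Pi.single j c)
    have h2 := vecL1_add_le βhat (Pi.single j c)
    have h3 : vecL1 (Pi.single j c) = 1 := by
      unfold vecL1
      rw [Finset.sum_eq_single j (fun k _ hk => by simp [hk]) (by simp)]
      simpa using hc
    rw [dotProduct_single] at h1
    nlinarith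
  have h1 := key 1 (by simp)
  have h2 := key (-1) (by simp)
  rw [abs_le]
  constructor <;> linarith

/-- The quadratic part is nonnegative as soon as the objective has a minimizer. -/
lemma quadratic_nonneg_of_minimizer (hS : S.IsSymm) (hlam : 0 ≤ lam)
    (hmin : ∀ β, scioObj S e lam βhat ≤ scioObj S e lam β) (d : Fin p → ℝ) :
    0 ≤ d ⬝ᵥ S *ᵥ d := by
  have h : 0 ≤ (d ⬝ᵥ S *ᵥ d) / 2 := by
    refine nonneg_of_forall_pos_add_mul_nonneg
      (a := (S *ᵥ βhat - e) ⬝ᵥ d + lam * vecL1 d) fun r hr => ?_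
    have h1 := hmin (βhat + r • d)
    rw [scioObj_add_smul hS] at h1
    have h2 := vecL1_add_le βhat (r • d)
    rw [vecL1_smul, abs_of_pos hr] at h2
    have h3 := mul_le_mul_of_nonneg_left h2 hlam
    refine nonneg_of_mul_nonneg_right (a := r) ?_ hr
    nlinarith
  linarith

end Minimizer

lemma card_filter_mul_rpow_le {ι : Type*} [Fintype ι] {b : ι → ℝ} {q s t : ℝ}
    (hq : 0 ≤ q) (ht : 0 ≤ t) (hs : ∑ j, |b j| ^ q ≤ s) :
    ((Finset.univ.filter fun j => t < |b j|).card : ℝ) * t ^ q ≤ s := by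
  rw [← nsmul_eq_mul, ← Finset.sum_const]
  refine le_trans ?_ hs
  calc _ ≤ ∑ j ∈ Finset.univ.filter (fun j => t < |b j|), |b j| ^ q :=
        Finset.sum_le_sum fun j hj =>
          Real.rpow_le_rpow ht (Finset.mem_filter.mp hj).2.le hq
    _ ≤ _ := Finset.sum_le_sum_of_subset_of_nonneg (Finset.filter_subset _ _)
        fun j _ _ => by positivity

lemma sum_filter_not_abs_le {ι : Type*} [Fintype ι] {b : ι → ℝ} {q s t : ℝ}
    (hq : q < 1) (ht : 0 ≤ t) (hs : ∑ j, |b j| ^ q ≤ s) :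
    ∑ j ∈ Finset.univ.filter (fun j => ¬ t < |b j|), |b j| ≤ t ^ (1 - q) * s := by
  have hb : ∀ j, ¬ t < |b j| → |b j| ≤ t ^ (1 - q) * |b j| ^ q := by
    intro j hj
    rcases (abs_nonneg (b j)).eq_or_lt with h0 | h0
    · rw [← h0]
      positivity
    · calc |b j| = |b j| ^ (1 - q) * |b j| ^ q := by
            rw [← Real.rpow_add h0, sub_add_cancel, Real.rpow_one]
        _ ≤ _ := mul_le_mul_of_nonneg_right
            (Real.rpow_le_rpow h0.le (not_lt.mp hj) (by linarith)) (by positivity)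
  calc _ ≤ ∑ j ∈ Finset.univ.filter (fun j => ¬ t < |b j|), t ^ (1 - q) * |b j| ^ q :=
        Finset.sum_le_sum fun j hj => hb j (Finset.mem_filter.mp hj).2
    _ ≤ ∑ j, t ^ (1 - q) * |b j| ^ q :=
        Finset.sum_le_sum_of_subset_of_nonneg (Finset.filter_subset _ _)
          fun j _ _ => by positivity
    _ ≤ _ := by
        rw [← Finset.mul_sum]
        exact mul_le_mul_of_nonneg_left hs (by positivity)

/-- The cone-type inequality comparing `ℓ1` norms through a coordinate set `P`. -/
lemma vecL1_sub_vecL1_le {p : ℕ} (a b : Fin p → ℝ) (P : Fin p → Prop) [DecidablePred P] :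
    vecL1 b - vecL1 a ≤ 2 * ∑ j ∈ Finset.univ.filter P, |(a - b) j| - vecL1 (a - b)
      + 2 * ∑ j ∈ Finset.univ.filter (fun j => ¬ P j), |b j| := by
  unfold vecL1
  rw [← Finset.sum_filter_add_sum_filter_not Finset.univ P (fun j => |b j|),
    ← Finset.sum_filter_add_sum_filter_not Finset.univ P (fun j => |a j|),
    ← Finset.sum_filter_add_sum_filter_not Finset.univ P (fun j => |(a - b) j|)]
  have h1 : ∑ j ∈ Finset.univ.filter P, |b j| ≤
      ∑ j ∈ Finset.univ.filter P, |a j| + ∑ j ∈ Finset.univ.filter P, |(a - b) j| := by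
    rw [← Finset.sum_add_distrib]
    refine Finset.sum_le_sum fun j _ => ?_
    have := abs_sub_abs_le_abs_sub (b j) (a j)
    rw [abs_sub_comm] at this
    simp only [Pi.sub_apply]
    linarith
  have h2 : ∑ j ∈ Finset.univ.filter (fun j => ¬ P j), |(a - b) j| ≤
      ∑ j ∈ Finset.univ.filter (fun j => ¬ P j), |a j|
        + ∑ j ∈ Finset.univ.filter (fun j => ¬ P j), |b j| := by
    rw [← Finset.sum_add_distrib]
    exact Finset.sum_le_sum fun j _ => abs_sub _ _
  linarith

/-- Theorem 1 (ℓ1 bound): for Ω in the weak-sparsity class U_q(s_p, M_p), any global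
minimizer β̂ of the SCIO objective with target column β* = Ω e_i satisfies
|β̂ − β*|₁ ≤ 16 ‖Ω‖_{L1}^{1−q} s_p λ^{1−q}. -/
theorem scio_column_l1_bound {p : ℕ} (q s M : ℝ) (hq0 : 0 ≤ q) (hq1 : q < 1)
    (hs : 0 < s) (hM : 0 < M)
    (Ω : Matrix (Fin p) (Fin p) ℝ) (hΩsym : Ω.IsSymm) (hΩpd : Ω.PosDef)
    (hΩs : ∀ j, ∑ i, |Ω i j| ^ q ≤ s) (hΩM : matL1 Ω ≤ M)
    (Shat : Matrix (Fin p) (Fin p) ℝ) (hSsym : Shat.IsSymm)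
    (lam : ℝ) (hlam0 : 0 ≤ lam)
    (hlam1 : 3 * matL1 Ω * matLinf (Shat - Ω⁻¹) ≤ lam)
    (hlam2 : (matL1 Ω) ^ (-q) * lam ^ (1 - q) * s ≤ 1 / 2)
    (i : Fin p) (βstar : Fin p → ℝ) (hβstar : βstar = Ω.mulVec (Pi.single i 1))
    (βhat : Fin p → ℝ)
    (hmin : ∀ β : Fin p → ℝ,
      scioObj Shat (Pi.single i 1) lam βhat ≤ scioObj Shat (Pi.single i 1) lam β) :
    vecL1 (βhat - βstar) ≤ 16 * (matL1 Ω) ^ (1 - q) * s * lam ^ (1 - q) := by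
  set L := matL1 Ω
  set δ := matLinf (Shat - Ω⁻¹)
  set e : Fin p → ℝ := Pi.single i 1 with he
  set h := βhat - βstar with hh
  have hcol : ∀ j, βstar j = Ω j i := fun j => by simp [hβstar, he]
  have hLpos : 0 < L :=
    calc 0 < |Ω i i| := abs_pos.mpr hΩpd.diag_pos.ne'
      _ ≤ ∑ j, |Ω j i| := Finset.single_le_sum (f := fun j => |Ω j i|)
          (fun _ _ => abs_nonneg _) (Finset.mem_univ i)
      _ ≤ L := sum_abs_col_le_matL1 Ω i
  have hunit : IsUnit Ω.det := hΩpd.det_pos.ne'.isUnit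
  have hδ0 : 0 ≤ δ := (abs_nonneg _).trans (abs_apply_le_matLinf (Shat - Ω⁻¹) i i)
  have hβL : vecL1 βstar ≤ L := by
    simpa only [vecL1, hcol] using sum_abs_col_le_matL1 Ω i
  have hβs : ∑ j, |βstar j| ^ q ≤ s := by simpa only [hcol] using hΩs i
  have hpert : ∀ (v : Fin p → ℝ) j, |((Shat - Ω⁻¹) *ᵥ v) j| ≤ δ * vecL1 v := fun v j =>
    abs_dotProduct_le_mul_vecL1 fun k => abs_apply_le_matLinf (Shat - Ω⁻¹) j k
  have hinv : Ω⁻¹ *ᵥ βstar = e := by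
    rw [hβstar, mulVec_mulVec, Matrix.nonsing_inv_mul _ hunit, one_mulVec]
  have hstar : ∀ j, |(Shat *ᵥ βstar - e) j| ≤ lam / 3 := by
    intro j
    have h1 := hpert βstar j
    rw [sub_mulVec, hinv] at h1
    nlinarith [mul_le_mul_of_nonneg_left hβL hδ0]
  have hgrad : Shat *ᵥ h = (Shat *ᵥ βhat - e) - (Shat *ᵥ βstar - e) := by
    rw [hh, mulVec_sub, sub_sub_sub_cancel_right]
  have hSh : ∀ j, |(Shat *ᵥ h) j| ≤ 4 * lam / 3 := by
    intro j
    rw [hgrad, Pi.sub_apply]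
    have h1 := abs_sub ((Shat *ᵥ βhat - e) j) ((Shat *ᵥ βstar - e) j)
    linarith [abs_gradient_le_of_minimizer hSsym hlam0 hmin j, hstar j]
  have hcov : ∀ j, |(Ω⁻¹ *ᵥ h) j| ≤ 4 * lam / 3 + δ * vecL1 h := by
    intro j
    have h1 := hpert h j
    have h2 : (Ω⁻¹ *ᵥ h) j = (Shat *ᵥ h) j - ((Shat - Ω⁻¹) *ᵥ h) j := by
      rw [sub_mulVec, Pi.sub_apply, sub_sub_cancel]
    rw [h2]
    linarith [abs_sub ((Shat *ᵥ h) j) (((Shat - Ω⁻¹) *ᵥ h) j), hSh j]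
  have hsup : ∀ j, |h j| ≤ 4 / 3 * (L * lam) + lam / 3 * vecL1 h := by
    intro j
    have h1 : h j = (Ω⁻¹ *ᵥ h) ⬝ᵥ Ω j := by
      rw [dotProduct_comm]
      change h j = (Ω *ᵥ (Ω⁻¹ *ᵥ h)) j
      rw [mulVec_mulVec, Matrix.mul_nonsing_inv _ hunit, one_mulVec]
    have h2 : vecL1 (Ω j) ≤ L := by
      have h3 := sum_abs_col_le_matL1 Ω j
      simp only [fun k => hΩsym.apply j k] at h3
      exact h3
    have h3 := abs_dotProduct_le_mul_vecL1 (b := Ω j) hcov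
    rw [← h1] at h3
    have h4 : 0 ≤ 4 * lam / 3 + δ * vecL1 h := (abs_nonneg _).trans (hcov j)
    nlinarith [mul_le_mul_of_nonneg_left h2 h4,
      mul_le_mul_of_nonneg_right hlam1 (vecL1_nonneg h)]
  have hK : 16 * L ^ (1 - q) * s * lam ^ (1 - q) = 16 * ((L * lam) ^ (1 - q) * s) := by
    rw [Real.mul_rpow hLpos.le hlam0]
    ring
  rw [hK]
  rcases hlam0.eq_or_lt with h0 | hlampos
  · have hzero : ∀ j, |h j| = 0 := fun j =>
      le_antisymm (by simpa [← h0] using hsup j) (abs_nonneg _)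
    have : vecL1 h = 0 := Finset.sum_eq_zero fun j _ => hzero j
    rw [this]
    positivity
  have ht : 0 < L * lam := mul_pos hLpos hlampos
  have htail := sum_filter_not_abs_le hq1 ht.le hβs
  have hcard := card_filter_mul_rpow_le hq0 ht.le hβs
  set K := (L * lam) ^ (1 - q) * s
  set n : ℝ := ((Finset.univ.filter fun j => L * lam < |βstar j|).card : ℝ)
  have hn0 : 0 ≤ n := Nat.cast_nonneg _
  have hnt : n * (L * lam) ≤ K := by
    have h1 : L * lam = (L * lam) ^ q * (L * lam) ^ (1 - q) := by
      rw [← Real.rpow_add ht, add_sub_cancel, Real.rpow_one]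
    calc n * (L * lam) = (L * lam) ^ (1 - q) * (n * (L * lam) ^ q) := by
          conv_lhs => rw [h1]
          ring
      _ ≤ K := mul_le_mul_of_nonneg_left hcard (by positivity)
  have hnlam : n * lam ≤ 1 / 2 := by
    have h1 : K = L * (L ^ (-q) * lam ^ (1 - q) * s) := by
      have h2 : L ^ (1 - q) = L * L ^ (-q) := by
        rw [sub_eq_add_neg, Real.rpow_add hLpos, Real.rpow_one]
      simp only [K]
      rw [Real.mul_rpow hLpos.le hlam0, h2]
      ring
    refine (le_of_mul_le_mul_left ?_ hLpos).trans hlam2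
    rw [← h1]
    linarith
  have hJ : ∑ j ∈ Finset.univ.filter (fun j => L * lam < |βstar j|), |h j| ≤
      n * (4 / 3 * (L * lam) + lam / 3 * vecL1 h) := by
    rw [← nsmul_eq_mul]
    exact Finset.sum_le_card_nsmul _ _ _ fun j _ => hsup j
  have hcone := vecL1_sub_vecL1_le βhat βstar (fun j => L * lam < |βstar j|)
  rw [← hh] at hcone
  have hbasic : 0 ≤ lam * (vecL1 h / 3 + (vecL1 βstar - vecL1 βhat)) := by
    have h1 := scioObj_variational_ineq hSsym hlam0 hmin (-h)
    have h2 := quadratic_nonneg_of_minimizer hSsym hlam0 hmin h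
    have h3 := (abs_le.mp (abs_dotProduct_le_mul_vecL1 (b := h) hstar)).1
    have h4 : βhat + -h = βstar := by
      rw [hh]
      abel
    rw [h4, dotProduct_neg] at h1
    rw [hgrad, dotProduct_comm, sub_dotProduct] at h2
    linarith
  have hbasic' := nonneg_of_mul_nonneg_right hbasic hlampos
  have := mul_le_mul_of_nonneg_right hnlam (vecL1_nonneg h)
  have hK0 : 0 ≤ K := by positivity
  nlinarith
end

section
/- Let β*, β̂ ∈ ℝ^p and set h = β* − β̂. If 3(|β*|_1 − |β̂|_1) ≥ −|h|_1, then for every index set J ⊆ {1,…,p}, |h_{J^c}|_1 ≤ 2|h_J|_1 + 3|β*_{J^c}|_1. -/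
open scoped BigOperators

/-- Cone-type inequality: if 3(|β*|₁ − |β̂|₁) ≥ −|h|₁ where h = β* − β̂, then for every
index set J, |h_{Jᶜ}|₁ ≤ 2|h_J|₁ + 3|β*_{Jᶜ}|₁. -/
theorem cone_inequality {p : ℕ} (βstar βhat : Fin p → ℝ) (h : Fin p → ℝ)
    (hh : h = βstar - βhat)
    (hineq : -(∑ j, |h j|) ≤ 3 * ((∑ j, |βstar j|) - ∑ j, |βhat j|))
    (J : Finset (Fin p)) :
    ∑ j ∈ Jᶜ, |h j| ≤ 2 * ∑ j ∈ J, |h j| + 3 * ∑ j ∈ Jᶜ, |βstar j| := by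
  have hJ : ∑ j ∈ J, |βstar j| ≤ ∑ j ∈ J, |βhat j| + ∑ j ∈ J, |h j| := by
    rw [← Finset.sum_add_distrib]
    refine Finset.sum_le_sum fun j _ => ?_
    simpa [hh] using abs_add_le (βhat j) (βstar j - βhat j)
  have hJc : ∑ j ∈ Jᶜ, |h j| ≤ ∑ j ∈ Jᶜ, |βstar j| + ∑ j ∈ Jᶜ, |βhat j| := by
    rw [← Finset.sum_add_distrib]
    refine Finset.sum_le_sum fun j _ => ?_
    simpa [hh] using abs_sub (βstar j) (βhat j)
  rw [← Finset.sum_add_sum_compl J fun j => |h j|,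
    ← Finset.sum_add_sum_compl J fun j => |βstar j|,
    ← Finset.sum_add_sum_compl J fun j => |βhat j|] at hineq
  linarith
end

section
/- Let Ω ∈ ℝ^{p×p} be symmetric positive definite with Σ = Ω^{-1}, let Σ̂ ∈ ℝ^{p×p} be symmetric, fix i ∈ {1,…,p}, and set β* = Ω e_i (so Σβ* = e_i). Suppose λ ≥ 3‖Ω‖_{L1}‖Σ̂ − Σ‖_∞ and β̂ is a global minimizer over ℝ^p of β ↦ (1/2)βᵀΣ̂β − e_iᵀβ + λ|β|_1. Then, with h = β* − β̂, one has |h|_∞ ≤ (1/3)λ|h|_1 + (4/3)‖Ω‖_{L1}λ. -/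
open Matrix
open scoped BigOperators

/-- The ℓ∞ norm of a vector in ℝ^p. -/
noncomputable def vecLinf {p : ℕ} (a : Fin p → ℝ) : ℝ := ⨆ i, |a i|

lemma vecL1_single {p : ℕ} (j : Fin p) (t : ℝ) : vecL1 (Pi.single j t) = |t| := by
  unfold vecL1
  rw [Finset.sum_eq_single j]
  · simp
  · intro k _ hk
    simp [hk]
  · simp

lemma matL1_nonneg {p : ℕ} (A : Matrix (Fin p) (Fin p) ℝ) : 0 ≤ matL1 A :=
  Real.iSup_nonneg fun _ => Finset.sum_nonneg fun _ _ => abs_nonneg _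

lemma matLinf_nonneg {p : ℕ} (A : Matrix (Fin p) (Fin p) ℝ) : 0 ≤ matLinf A :=
  Real.iSup_nonneg fun _ => Real.iSup_nonneg fun _ => abs_nonneg _

lemma vecL1_col_le_matL1 {p : ℕ} (A : Matrix (Fin p) (Fin p) ℝ) (j : Fin p) :
    vecL1 (fun k => A k j) ≤ matL1 A :=
  le_ciSup (f := fun j => ∑ k, |A k j|) (Set.finite_range _).bddAbove j

lemma abs_entry_le_matLinf {p : ℕ} (A : Matrix (Fin p) (Fin p) ℝ) (j k : Fin p) :
    |A j k| ≤ matLinf A :=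
  (le_ciSup (f := fun k => |A j k|) (Set.finite_range _).bddAbove k).trans
    (le_ciSup (f := fun j => ⨆ k, |A j k|) (Set.finite_range _).bddAbove j)

/-- Hölder's inequality for the pairing of `ℓ1` with `ℓ∞`. -/
lemma abs_dotProduct_le {p : ℕ} (a b : Fin p → ℝ) {c : ℝ} (hb : ∀ k, |b k| ≤ c) :
    |a ⬝ᵥ b| ≤ vecL1 a * c := by
  unfold vecL1 dotProduct
  rw [Finset.sum_mul]
  refine (Finset.abs_sum_le_sum_abs _ _).trans (Finset.sum_le_sum fun k _ => ?_)
  rw [abs_mul]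
  exact mul_le_mul_of_nonneg_left (hb k) (abs_nonneg _)

lemma abs_mulVec_le_matLinf_mul {p : ℕ} (A : Matrix (Fin p) (Fin p) ℝ) (v : Fin p → ℝ)
    (j : Fin p) : |(A *ᵥ v) j| ≤ matLinf A * vecL1 v := by
  rw [mulVec, dotProduct_comm, mul_comm]
  exact abs_dotProduct_le v _ (abs_entry_le_matLinf A j)

lemma abs_mulVec_le_matL1_mul {p : ℕ} {A : Matrix (Fin p) (Fin p) ℝ} (hA : A.IsSymm)
    (v : Fin p → ℝ) {c : ℝ} (hc : 0 ≤ c) (hv : ∀ k, |v k| ≤ c) (j : Fin p) :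
    |(A *ᵥ v) j| ≤ matL1 A * c := by
  refine (abs_dotProduct_le (A j) v hv).trans (mul_le_mul_of_nonneg_right ?_ hc)
  have hrow : A j = fun k => A k j := funext fun k => hA.apply k j
  rw [hrow]
  exact vecL1_col_le_matL1 A j

lemma scioObj_add_single_le {p : ℕ} {S : Matrix (Fin p) (Fin p) ℝ} (hS : S.IsSymm)
    (e : Fin p → ℝ) {lam : ℝ} (hlam : 0 ≤ lam) (β : Fin p → ℝ) (j : Fin p) (t : ℝ) :
    scioObj S e lam (β + Pi.single j t) ≤
      scioObj S e lam β + t * ((S *ᵥ β) j - e j) + t ^ 2 * S j j / 2 + lam * |t| := by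
  have hL1 := mul_le_mul_of_nonneg_left (vecL1_add_le β (Pi.single j t)) hlam
  rw [vecL1_single] at hL1
  have hcross : β ⬝ᵥ S *ᵥ Pi.single j t = t * (S *ᵥ β) j := by
    rw [dotProduct_mulVec, ← mulVec_transpose, hS.eq, dotProduct_single, mul_comm]
  have hquad : (S *ᵥ Pi.single j t) j = S j j * t := by
    rw [mulVec, dotProduct_single]
  simp only [scioObj, mulVec_add, dotProduct_add, add_dotProduct, hcross, single_dotProduct,
    dotProduct_single, hquad]
  linarith

/-- The first-order optimality condition for a minimizer of the SCIO objective. -/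
lemma abs_mulVec_sub_le_of_forall_scioObj_le {p : ℕ} {S : Matrix (Fin p) (Fin p) ℝ}
    (hS : S.IsSymm) (e : Fin p → ℝ) {lam : ℝ} (hlam : 0 ≤ lam) (β : Fin p → ℝ)
    (hmin : ∀ γ, scioObj S e lam β ≤ scioObj S e lam γ) (j : Fin p) :
    |(S *ᵥ β) j - e j| ≤ lam := by
  have hvar : ∀ t : ℝ, 0 ≤ t * ((S *ᵥ β) j - e j) + t ^ 2 * S j j / 2 + lam * |t| := by
    intro t
    linarith [hmin (β + Pi.single j t), scioObj_add_single_le hS e hlam β j t]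
  generalize (S *ᵥ β) j - e j = g at hvar ⊢
  have hbound : ∀ ε > 0, |g| ≤ lam + ε := by
    intro ε hε
    have hden : 0 < |S j j| + 1 := by positivity
    set t := ε / (|S j j| + 1)
    have htpos : 0 < t := div_pos hε hden
    have htε : t * S j j / 2 ≤ ε := by
      have hmul : t * (|S j j| + 1) = ε := div_mul_cancel₀ _ hden.ne'
      nlinarith [le_abs_self (S j j), abs_nonneg (S j j)]
    have hpos := hvar t
    have hneg := hvar (-t)
    rw [abs_neg] at hneg
    rw [abs_of_pos htpos] at hpos hneg
    rw [abs_le]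
    constructor
    · have : 0 ≤ t * (g + t * S j j / 2 + lam) := by linarith
      linarith [nonneg_of_mul_nonneg_right this htpos]
    · have : 0 ≤ t * (-g + t * S j j / 2 + lam) := by linarith
      linarith [nonneg_of_mul_nonneg_right this htpos]
  exact le_of_forall_pos_le_add hbound

/-- ℓ∞ bound on the error h = β* − β̂ for a SCIO column minimizer:
|h|_∞ ≤ (1/3)λ|h|₁ + (4/3)‖Ω‖_{L1}λ. -/
theorem scio_error_linf_via_l1 {p : ℕ}
    (Ω : Matrix (Fin p) (Fin p) ℝ) (hΩsym : Ω.IsSymm) (hΩpd : Ω.PosDef)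
    (Shat : Matrix (Fin p) (Fin p) ℝ) (hSsym : Shat.IsSymm)
    (i : Fin p) (βstar : Fin p → ℝ) (hβstar : βstar = Ω.mulVec (Pi.single i 1))
    (lam : ℝ) (hlam1 : 3 * matL1 Ω * matLinf (Shat - Ω⁻¹) ≤ lam)
    (βhat : Fin p → ℝ)
    (hmin : ∀ β : Fin p → ℝ,
      scioObj Shat (Pi.single i 1) lam βhat ≤ scioObj Shat (Pi.single i 1) lam β)
    (h : Fin p → ℝ) (hh : h = βstar - βhat) :
    vecLinf h ≤ (1 / 3) * lam * vecL1 h + (4 / 3) * matL1 Ω * lam := by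
  have hdet : IsUnit Ω.det := hΩpd.det_pos.ne'.isUnit
  set D := Shat - Ω⁻¹ with hD
  have hM := matL1_nonneg Ω
  have hDn := matLinf_nonneg D
  have hlam : 0 ≤ lam := le_trans (by positivity) hlam1
  have hhn := vecL1_nonneg h
  have hstar : Ω⁻¹ *ᵥ βstar = Pi.single i 1 := by
    rw [hβstar, mulVec_mulVec, nonsing_inv_mul _ hdet, one_mulVec]
  have hstarL1 : vecL1 βstar ≤ matL1 Ω := by
    have hcol : βstar = fun k => Ω k i := by
      rw [hβstar, mulVec_single_one]
      rfl
    rw [hcol]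
    exact vecL1_col_le_matL1 Ω i
  have hdecomp : Ω⁻¹ *ᵥ h =
      D *ᵥ βstar - D *ᵥ h - (Shat *ᵥ βhat - Pi.single i 1) := by
    rw [hD, sub_mulVec, sub_mulVec, hstar, hh, mulVec_sub, mulVec_sub, hstar]
    abel
  have hres : ∀ k, |(Ω⁻¹ *ᵥ h) k| ≤ matLinf D * vecL1 h + 4 / 3 * lam := by
    intro k
    have hkkt := abs_mulVec_sub_le_of_forall_scioObj_le hSsym _ hlam βhat hmin k
    have hDstar := (abs_mulVec_le_matLinf_mul D βstar k).trans
      (mul_le_mul_of_nonneg_left hstarL1 hDn)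
    have hDh := abs_mulVec_le_matLinf_mul D h k
    rw [hdecomp]
    simp only [Pi.sub_apply]
    rw [abs_le] at *
    constructor <;> linarith
  have hinv : Ω *ᵥ (Ω⁻¹ *ᵥ h) = h := by
    rw [mulVec_mulVec, mul_nonsing_inv _ hdet, one_mulVec]
  have : Nonempty (Fin p) := ⟨i⟩
  refine ciSup_le fun k => ?_
  have hk := abs_mulVec_le_matL1_mul hΩsym (Ω⁻¹ *ᵥ h) (by positivity) hres k
  rw [hinv] at hk
  linarith [mul_le_mul_of_nonneg_right hlam1 hhn]
end

section
/- Let β̂, β̃ ∈ ℝ^p with |β̃|_1 ≤ |β̂|_1. Then for every index set J ⊆ {1,…,p}, |β̃ − β̂|_1 ≤ 2( |(β̂ − β̃)_J|_1 + |β̂_{J^c}|_1 ). -/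
open scoped BigOperators

/-- Symmetrization ℓ1 inequality: if |β̃|₁ ≤ |β̂|₁, then for every index set J,
|β̃ − β̂|₁ ≤ 2(|(β̂ − β̃)_J|₁ + |β̂_{Jᶜ}|₁). -/
theorem symmetrization_l1_inequality {p : ℕ} (βhat βtilde : Fin p → ℝ)
    (hle : (∑ j, |βtilde j|) ≤ ∑ j, |βhat j|)
    (J : Finset (Fin p)) :
    ∑ j, |βtilde j - βhat j| ≤
      2 * ((∑ j ∈ J, |βhat j - βtilde j|) + ∑ j ∈ Jᶜ, |βhat j|) := by
  have hcompl : ∑ j ∈ Jᶜ, |βtilde j - βhat j| ≤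
      ∑ j ∈ Jᶜ, |βtilde j| + ∑ j ∈ Jᶜ, |βhat j| := by
    rw [← Finset.sum_add_distrib]
    exact Finset.sum_le_sum fun j _ => abs_sub _ _
  have hJ : ∑ j ∈ J, |βhat j| - ∑ j ∈ J, |βtilde j| ≤ ∑ j ∈ J, |βhat j - βtilde j| := by
    rw [← Finset.sum_sub_distrib]
    exact Finset.sum_le_sum fun j _ => abs_sub_abs_le_abs_sub _ _
  have hcomm : ∑ j ∈ J, |βtilde j - βhat j| = ∑ j ∈ J, |βhat j - βtilde j| :=
    Finset.sum_congr rfl fun j _ => abs_sub_comm _ _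
  rw [← Finset.sum_add_sum_compl J, ← Finset.sum_add_sum_compl J fun j => |βhat j|] at hle
  rw [← Finset.sum_add_sum_compl J]
  linarith
end
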